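/- For every δ > 0 there exist δ_1, δ_2 ∈ (0, δ) with δ_1 < δ_2, and constants ε > 0 and C > 0, such that for every integer N ≥ 1, every t ∈ [0,1], every ρ ∈ ℝ with x := U_t'(ρ), and all α, β ∈ [0,1] ∩ (1/N)·ℤ satisfying |α − x| < δ_1 and |β − x| ≥ 2·δ_2, one has P_β^N(t,ρ) ≤ C·e^{−ε·N}·P_α^N(t,ρ). -/

import Mathlib

open Set Filter

noncomputable def GP : ℝ → ℝ := fun x => x * Real.log x + (1 - x) * Real.log (1 - x)

noncomputable def Gt (f0 f1 : ℝ → ℝ) (t : ℝ) : ℝ → ℝ :=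
  fun x => GP x + ((1 - t) * f0 x + t * f1 x)

noncomputable def Phase (G : ℝ → ℝ) (α : ℝ) : ℝ → ℝ :=
  fun x => (x - α) * deriv G x - (G x - G α)

noncomputable def Qnorm (G : ℝ → ℝ) (N : ℕ) (α : ℝ) : ℝ :=
  2 * Real.pi * ∫ x in (0:ℝ)..1, Real.exp (-(N : ℝ) * Phase G α x)

noncomputable def RPhase (G : ℝ → ℝ) (α : ℝ) : ℝ → ℝ :=
  fun y => (1 / α) * Phase G α (α * (1 + y))

noncomputable def Leg (G : ℝ → ℝ) (S : Set ℝ) : ℝ → ℝ :=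
  fun ρ => sSup ((fun x => x * ρ - G x) '' S)

noncomputable def QQ (G : ℝ → ℝ) (N : ℕ) (α : ℝ) : ℝ :=
  Qnorm G N α * Real.exp ((N : ℝ) * G α)

noncomputable def Pcal (f0 f1 : ℝ → ℝ) (N : ℕ) (t ρ α : ℝ) : ℝ :=
  Real.exp ((N:ℝ) * (α * ρ - Leg (Gt f0 f1 t) (Set.Icc 0 1) ρ)) / QQ (Gt f0 f1 t) N α

/-!
By the definition of the norming constant, `P_α = exp (-N D(α)) / Q(α)`, where
`D(y) = G(y) + U(ρ) - y ρ ≥ 0` is the gap in the Fenchel–Young inequality. It differs from `G` by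
an affine function, vanishes at `x = U'(ρ)`, and by strong convexity grows at least like
`(y - x)²`, so `D(β) ≥ 2 m δ₂²`. If `α` lies between `x` and `β`, convexity gives
`D(α) ≤ D(β) / 2`; if it lies on the other side of `x`, then `D(α)` is at most the second
difference `D(α) + D(2x - α)` of `D`, equivalently of `G`. The same device controls `Q`: the phases
satisfy `F_β(y) + F_{2y-β}(y) = G(β) + G(2y - β) - 2 G(y)` with both terms nonnegative, so `F_β` is
small on an interval of fixed length adjacent to `β`, and `Q(β)` decays at an arbitrarily slow
exponential rate. Only a strong convexity constant and a modulus of continuity of `G` enter, and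
these are uniform in `t`: `G_P'' = 1 / (x (1 - x))` blows up at the endpoints, so `G_0''` and
`G_1''` are bounded away from zero.
-/

lemma strongConvexOn_of_le_iteratedDeriv_two {D : Set ℝ} (hD : Convex ℝ D) {f : ℝ → ℝ} {m : ℝ}
    (hf : ContinuousOn f D) (hf₂ : ∀ x ∈ interior D, ContDiffAt ℝ 2 f x)
    (hm : ∀ x ∈ interior D, m ≤ iteratedDeriv 2 f x) : StrongConvexOn D m f := by
  have hsub : ∀ x ∈ interior D, ContDiffAt ℝ 2 (fun y => f y - m / 2 * y ^ 2) x := fun x hx =>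
    (hf₂ x hx).sub (by fun_prop)
  have hderiv : ∀ x ∈ interior D,
      iteratedDeriv 2 (fun y => f y - m / 2 * y ^ 2) x = iteratedDeriv 2 f x - m := by
    intro x hx
    rw [iteratedDeriv_fun_sub (hf₂ x hx) (by fun_prop), iteratedDeriv_const_mul_field,
      iteratedDeriv_pow]
    norm_num [Nat.descFactorial]
  rw [strongConvexOn_iff_convex]
  simp only [Real.norm_eq_abs, sq_abs]
  refine convexOn_of_deriv2_nonneg hD (hf.sub (by fun_prop))
    (fun x hx => ((hsub x hx).differentiableAt two_ne_zero).differentiableWithinAt)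
    (fun x hx => ?_) fun x hx => ?_
  · have hdiff := (hsub x hx).contDiffWithinAt (s := univ)
      |>.differentiableWithinAt_iteratedDerivWithin (m := 1) (by norm_num) (by simp)
    rw [iteratedDerivWithin_univ, iteratedDeriv_one] at hdiff
    exact hdiff.mono (subset_univ _)
  · rw [← iteratedDeriv_eq_iterate, hderiv x hx]
    exact sub_nonneg.2 (hm x hx)

lemma strongConvexOn_convexCombination {E : Type*} [NormedAddCommGroup E] [NormedSpace ℝ E]
    {s : Set E} {f g : E → ℝ} {m a b : ℝ} (hf : StrongConvexOn s m f) (hg : StrongConvexOn s m g)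
    (ha : 0 ≤ a) (hb : 0 ≤ b) (hab : a + b = 1) :
    StrongConvexOn s m (fun x => a * f x + b * g x) := by
  refine ⟨hf.1, fun x hx y hy c d hc hd hcd => ?_⟩
  have hf' := mul_le_mul_of_nonneg_left (hf.2 hx hy hc hd hcd) ha
  have hg' := mul_le_mul_of_nonneg_left (hg.2 hx hy hc hd hcd) hb
  obtain rfl := eq_sub_of_add_eq hab
  simp only [smul_eq_mul] at hf' hg' ⊢
  linarith

lemma le_of_isMinOn_of_strongConvexOn {E : Type*} [NormedAddCommGroup E] [NormedSpace ℝ E]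
    {s : Set E} {f : E → ℝ} {m : ℝ} {x y : E} (hf : StrongConvexOn s m f) (hx : x ∈ s)
    (hmin : IsMinOn f s x) (hy : y ∈ s) : f x + m / 2 * ‖x - y‖ ^ 2 ≤ f y := by
  have hsegment : ∀ b ∈ Ioo (0 : ℝ) 1, f x + (1 - b) * (m / 2 * ‖x - y‖ ^ 2) ≤ f y := by
    intro b hb
    have hmid := hf.2 hx hy (sub_nonneg.2 hb.2.le) hb.1.le (sub_add_cancel 1 b)
    have hle : f x ≤ f ((1 - b) • x + b • y) :=
      hmin (hf.1 hx hy (sub_nonneg.2 hb.2.le) hb.1.le (sub_add_cancel 1 b))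
    simp only [smul_eq_mul] at hmid
    refine le_of_mul_le_mul_left ?_ hb.1
    linarith
  have hlim : Tendsto (fun b : ℝ => f x + (1 - b) * (m / 2 * ‖x - y‖ ^ 2)) (nhdsWithin 0 (Ioi 0))
      (nhds (f x + (1 - 0) * (m / 2 * ‖x - y‖ ^ 2))) :=
    (Continuous.tendsto (by fun_prop) 0).mono_left nhdsWithin_le_nhds
  simpa using le_of_tendsto hlim
    (eventually_of_mem (Ioo_mem_nhdsGT one_pos) hsegment)

section Equicontinuity

variable {X Y Z : Type*} [PseudoMetricSpace X] [PseudoMetricSpace Y] [PseudoMetricSpace Z]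

lemma uniformEquicontinuousOn_iff_dist {ι : Type*} {F : ι → Y → Z} {S : Set Y} :
    UniformEquicontinuousOn F S ↔ ∀ η > 0, ∃ r > 0, ∀ i, ∀ y ∈ S, ∀ z ∈ S,
      dist y z < r → dist (F i y) (F i z) < η := by
  rw [(Metric.uniformity_basis_dist.inf_principal (S ×ˢ S)).uniformEquicontinuousOn_iff
    Metric.uniformity_basis_dist]
  exact forall₂_congr fun η _ => exists_congr fun r => and_congr_right fun _ =>
    ⟨fun h i y hy z hz hyz => h y z ⟨hyz, hy, hz⟩ i,
      fun h y z hyz i => h i y hyz.2.1 z hyz.2.2 hyz.1⟩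

lemma uniformEquicontinuousOn_of_continuousOn_prod {K : Set X} {S : Set Y} {F : X → Y → Z}
    (hK : IsCompact K) (hS : IsCompact S) (hF : ContinuousOn (Function.uncurry F) (K ×ˢ S)) :
    UniformEquicontinuousOn (fun k : K => F k) S := by
  rw [uniformEquicontinuousOn_iff_dist]
  intro η hη
  obtain ⟨r, hr, hunif⟩ := Metric.uniformContinuousOn_iff.1
    ((hK.prod hS).uniformContinuousOn_of_continuous hF) η hη
  refine ⟨r, hr, fun k y hy z hz hyz => hunif (k, y) ⟨k.2, hy⟩ (k, z) ⟨k.2, hz⟩ ?_⟩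
  rw [Prod.dist_eq, dist_self]
  exact max_lt hr hyz

end Equicontinuity

section YoungGap

/-- The gap `G(y) + U(ρ) - y ρ` in the Fenchel–Young inequality, where `U = Leg G S` is the
Legendre transform of `G` on `S`. It is the exponential rate of `P_y^N(ρ)`, up to the factor
`Qnorm G N y`. -/
noncomputable def youngGap (G : ℝ → ℝ) (S : Set ℝ) (ρ y : ℝ) : ℝ :=
  G y + Leg G S ρ - y * ρ

variable {G : ℝ → ℝ} {S : Set ℝ} {m ρ x y : ℝ}

lemma youngGap_nonneg (hS : IsCompact S) (hG : ContinuousOn G S) (hy : y ∈ S) :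
    0 ≤ youngGap G S ρ y := by
  have hbdd : BddAbove ((fun y => y * ρ - G y) '' S) := hS.bddAbove_image (by fun_prop)
  have hle : y * ρ - G y ≤ Leg G S ρ := le_csSup hbdd (mem_image_of_mem _ hy)
  unfold youngGap
  linarith

lemma exists_youngGap_eq_zero (hS : IsCompact S) (hne : S.Nonempty) (hG : ContinuousOn G S)
    (ρ : ℝ) : ∃ x ∈ S, youngGap G S ρ x = 0 := by
  obtain ⟨x, hx, hmax⟩ :=
    hS.exists_sSup_image_eq hne (show ContinuousOn (fun y => y * ρ - G y) S by fun_prop)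
  refine ⟨x, hx, ?_⟩
  rw [youngGap, Leg, hmax]
  ring

lemma strongConvexOn_youngGap (hG : StrongConvexOn S m G) :
    StrongConvexOn S m (youngGap G S ρ) := by
  refine ⟨hG.1, fun x hx y hy a b ha hb hab => ?_⟩
  have h := hG.2 hx hy ha hb hab
  obtain rfl := eq_sub_of_add_eq hab
  simp only [youngGap, smul_eq_mul] at h ⊢
  linarith

lemma sq_le_youngGap (hS : IsCompact S) (hGc : ContinuousOn G S) (hG : StrongConvexOn S m G)
    (hx : x ∈ S) (hx₀ : youngGap G S ρ x = 0) (hy : y ∈ S) :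
    m / 2 * (y - x) ^ 2 ≤ youngGap G S ρ y := by
  have hmin : IsMinOn (youngGap G S ρ) S x := fun z hz =>
    hx₀.trans_le (youngGap_nonneg hS hGc hz)
  have h := le_of_isMinOn_of_strongConvexOn (strongConvexOn_youngGap hG) hx hmin hy
  rwa [hx₀, zero_add, norm_sub_rev, Real.norm_eq_abs, sq_abs] at h

lemma leg_add_sub_mem_Icc (hS : IsCompact S) (hGc : ContinuousOn G S) (hm : 0 < m)
    (hG : StrongConvexOn S m G) (hx : x ∈ S) (hx₀ : youngGap G S ρ x = 0) (h : ℝ) :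
    Leg G S (ρ + h) - Leg G S ρ - h * x ∈ Icc 0 (h ^ 2 / (2 * m)) := by
  constructor
  · have hge := youngGap_nonneg (ρ := ρ + h) hS hGc hx
    unfold youngGap at hge hx₀
    linarith
  · suffices hle : Leg G S (ρ + h) ≤ Leg G S ρ + h * x + h ^ 2 / (2 * m) by linarith
    refine csSup_le ⟨_, mem_image_of_mem _ hx⟩ ?_
    rintro _ ⟨y, hy, rfl⟩
    have hgap := sq_le_youngGap hS hGc hG hx hx₀ hy
    have hsq : (y - x) * h - m / 2 * (y - x) ^ 2 ≤ h ^ 2 / (2 * m) := by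
      rw [le_div_iff₀ (by positivity)]
      linarith [sq_nonneg (m * (y - x) - h)]
    unfold youngGap at hgap
    linarith

lemma hasDerivAt_leg (hS : IsCompact S) (hGc : ContinuousOn G S) (hm : 0 < m)
    (hG : StrongConvexOn S m G) (hx : x ∈ S) (hx₀ : youngGap G S ρ x = 0) :
    HasDerivAt (Leg G S) x ρ := by
  rw [hasDerivAt_iff_isLittleO_nhds_zero]
  have hquadratic : (fun h : ℝ => Leg G S (ρ + h) - Leg G S ρ - h • x) =O[nhds 0]
      fun h => h ^ 2 := by
    refine .of_bound (1 / (2 * m)) (.of_forall fun h => ?_)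
    obtain ⟨hnonneg, hle⟩ := leg_add_sub_mem_Icc hS hGc hm hG hx hx₀ h
    rw [smul_eq_mul, Real.norm_of_nonneg hnonneg, Real.norm_of_nonneg (sq_nonneg h)]
    exact hle.trans_eq (by ring)
  exact hquadratic.trans_isLittleO (Asymptotics.isLittleO_pow_id one_lt_two)

lemma youngGap_le_half_add_of_abs_sub_lt (hS : IsCompact S) (hGc : ContinuousOn G S)
    (hG : ConvexOn ℝ S G) {ω r α β : ℝ}
    (hω : ∀ y ∈ S, ∀ z ∈ S, |y - z| < r → |G y - G z| ≤ ω)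
    (hx : x ∈ S) (hx₀ : youngGap G S ρ x = 0) (hα : α ∈ S) (hβ : β ∈ S)
    (hαx : |α - x| < r) (hβx : 2 * r ≤ |β - x|) :
    youngGap G S ρ α ≤ youngGap G S ρ β / 2 + 2 * ω := by
  have hβpos : 0 < |β - x| := by linarith [abs_nonneg (α - x)]
  set c := |α - x| / |β - x| with hc
  have hc₀ : 0 ≤ c := by positivity
  have hc₁ : c ≤ 1 / 2 := by rw [hc, div_le_iff₀ hβpos]; linarith
  set p := (1 - c) * x + c * β with hp
  have hpS : p ∈ S := hG.1 hx hβ (by linarith) hc₀ (sub_add_cancel 1 c)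
  have hpx : |p - x| = |α - x| := by
    rw [show p - x = c * (β - x) by rw [hp]; ring, abs_mul, abs_of_nonneg hc₀, hc,
      div_mul_cancel₀ _ hβpos.ne']
  have hβ₀ : 0 ≤ youngGap G S ρ β := youngGap_nonneg hS hGc hβ
  have hgap_p : youngGap G S ρ p ≤ youngGap G S ρ β / 2 := by
    have hconv := (strongConvexOn_zero.1 (strongConvexOn_youngGap (ρ := ρ)
      (strongConvexOn_zero.2 hG))).2 hx hβ (by linarith) hc₀ (sub_add_cancel 1 c)
    simp only [smul_eq_mul, hx₀, mul_zero, zero_add] at hconv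
    exact hconv.trans (by linarith [mul_le_mul_of_nonneg_right hc₁ hβ₀])
  have hω_α := (abs_le.1 (hω α hα x hx hαx)).2
  have hω_p := (abs_le.1 (hω p hpS x hx (hpx.trans_lt hαx))).2
  rcases abs_eq_abs.1 hpx with hside | hside
  · have hω₀ : 0 ≤ ω := (abs_nonneg _).trans (hω α hα x hx hαx)
    rw [sub_left_inj.1 hside] at hgap_p
    linarith
  · have hp₀ : 0 ≤ youngGap G S ρ p := youngGap_nonneg hS hGc hpS
    have hreflect : p = 2 * x - α := by linarith
    have hsecond : youngGap G S ρ α + youngGap G S ρ p = G α + G p - 2 * G x := by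
      simp only [youngGap] at hx₀ ⊢
      rw [hreflect]
      linarith
    linarith

lemma youngGap_add_le_of_abs_sub_deriv_leg (hS : IsCompact S) (hGc : ContinuousOn G S)
    (hm : 0 < m) (hG : StrongConvexOn S m G) {δ₁ δ₂ ω α β : ℝ}
    (hω : ∀ y ∈ S, ∀ z ∈ S, |y - z| < δ₁ → |G y - G z| ≤ ω) (hδ : δ₁ ≤ δ₂)
    (hα : α ∈ S) (hβ : β ∈ S) (hαx : |α - deriv (Leg G S) ρ| < δ₁)
    (hβx : 2 * δ₂ ≤ |β - deriv (Leg G S) ρ|) :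
    youngGap G S ρ α + (m * δ₂ ^ 2 - 2 * ω) ≤ youngGap G S ρ β := by
  obtain ⟨x, hx, hx₀⟩ := exists_youngGap_eq_zero hS ⟨α, hα⟩ hGc ρ
  rw [(hasDerivAt_leg hS hGc hm hG hx hx₀).deriv] at hαx hβx
  have hnear : youngGap G S ρ α ≤ youngGap G S ρ β / 2 + 2 * ω :=
    youngGap_le_half_add_of_abs_sub_lt hS hGc (strongConvexOn_zero.1 (hG.mono hm.le)) hω hx hx₀
      hα hβ hαx (by linarith)
  have hδ₂ : 0 ≤ δ₂ := (abs_nonneg _).trans (hαx.le.trans hδ)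
  have hfar : 2 * (m * δ₂ ^ 2) ≤ youngGap G S ρ β := by
    calc 2 * (m * δ₂ ^ 2) = m / 2 * (2 * δ₂) ^ 2 := by ring
      _ ≤ m / 2 * |β - x| ^ 2 := by gcongr
      _ = m / 2 * (β - x) ^ 2 := by rw [sq_abs]
      _ ≤ youngGap G S ρ β := sq_le_youngGap hS hGc hG hx hx₀ hβ
  linarith

end YoungGap

section Phase

variable {G : ℝ → ℝ} {S : Set ℝ} {α y : ℝ}

lemma phase_nonneg (hG : ConvexOn ℝ S G) (hα : α ∈ S) (hy : y ∈ S)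
    (hd : DifferentiableAt ℝ G y) : 0 ≤ Phase G α y := by
  unfold Phase
  rcases lt_trichotomy α y with h | rfl | h
  · have hslope := hG.slope_le_deriv hα hy h hd
    rw [slope_def_field, div_le_iff₀ (sub_pos.2 h)] at hslope
    linarith
  · simp
  · have hslope := hG.deriv_le_slope hy hα h hd
    rw [slope_def_field, le_div_iff₀ (sub_pos.2 h)] at hslope
    linarith

lemma phase_le_second_difference (hG : ConvexOn ℝ S G) (hα : 2 * y - α ∈ S) (hy : y ∈ S)
    (hd : DifferentiableAt ℝ G y) : Phase G α y ≤ (G α - G y) + (G (2 * y - α) - G y) := by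
  have hreflect := phase_nonneg hG hα hy hd
  unfold Phase at hreflect ⊢
  linarith

end Phase

section NormingConstant

variable {G : ℝ → ℝ} {α : ℝ}

lemma exists_Ioo_phase_le (hG : ConvexOn ℝ (Icc 0 1) G) (hd : DifferentiableOn ℝ G (Ioo 0 1))
    {r ω : ℝ} (hr : r ≤ 1 / 4)
    (hω : ∀ y ∈ Icc (0 : ℝ) 1, ∀ z ∈ Icc (0 : ℝ) 1, |y - z| < r → |G y - G z| ≤ ω)
    (hα : α ∈ Icc (0 : ℝ) 1) :
    ∃ a, 0 ≤ a ∧ a + r ≤ 1 ∧ ∀ y ∈ Ioo a (a + r), Phase G α y ≤ 2 * ω := by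
  have hnear : ∀ y ∈ Ioo (0 : ℝ) 1, 2 * y - α ∈ Icc (0 : ℝ) 1 → |α - y| < r →
      Phase G α y ≤ 2 * ω := by
    intro y hy hz hαy
    have hy' := Ioo_subset_Icc_self hy
    have hα_y := (abs_le.1 (hω α hα y hy' hαy)).2
    have hz_y := (abs_le.1 (hω (2 * y - α) hz y hy'
      (by rwa [show 2 * y - α - y = y - α by ring, abs_sub_comm]))).2
    have hle := phase_le_second_difference hG hz hy' (hd.differentiableAt (Ioo_mem_nhds hy.1 hy.2))
    linarith
  obtain ⟨hα₀, hα₁⟩ := hα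
  rcases le_total α (1 / 2) with hhalf | hhalf
  · refine ⟨α, hα₀, by linarith, fun y ⟨hy₀, hy₁⟩ => hnear y ?_ ?_ ?_⟩
    · constructor <;> linarith
    · constructor <;> linarith
    · rw [abs_lt]; constructor <;> linarith
  · refine ⟨α - r, by linarith, by linarith, fun y ⟨hy₀, hy₁⟩ => hnear y ?_ ?_ ?_⟩
    · constructor <;> linarith
    · constructor <;> linarith
    · rw [abs_lt]; constructor <;> linarith

lemma exp_neg_phase_le_one (hG : ConvexOn ℝ (Icc 0 1) G) (hd : DifferentiableOn ℝ G (Ioo 0 1))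
    (N : ℕ) (hα : α ∈ Icc (0 : ℝ) 1) {y : ℝ} (hy : y ∈ Ioo (0 : ℝ) 1) :
    Real.exp (-(N : ℝ) * Phase G α y) ≤ 1 := by
  have hphase := phase_nonneg hG hα (Ioo_subset_Icc_self hy)
    (hd.differentiableAt (Ioo_mem_nhds hy.1 hy.2))
  rw [Real.exp_le_one_iff, neg_mul, neg_nonpos]
  positivity

lemma intervalIntegrable_exp_neg_phase (hG : ConvexOn ℝ (Icc 0 1) G)
    (hd : DifferentiableOn ℝ G (Ioo 0 1)) (N : ℕ) (hα : α ∈ Icc (0 : ℝ) 1) :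
    IntervalIntegrable (fun y => Real.exp (-(N : ℝ) * Phase G α y)) MeasureTheory.volume 0 1 := by
  rw [intervalIntegrable_iff_integrableOn_Ioo_of_le zero_le_one]
  refine MeasureTheory.Integrable.of_bound ?_ 1 ?_
  · have hGm : AEMeasurable G (MeasureTheory.volume.restrict (Ioo 0 1)) :=
      hd.continuousOn.aemeasurable measurableSet_Ioo
    have hphase : AEMeasurable (Phase G α) (MeasureTheory.volume.restrict (Ioo 0 1)) :=
      ((measurable_id.sub_const α).mul (measurable_deriv G)).aemeasurable.sub
        (hGm.sub_const (G α))
    exact (hphase.const_mul _).exp.aestronglyMeasurable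
  · refine MeasureTheory.ae_restrict_of_forall_mem measurableSet_Ioo fun y hy => ?_
    rw [Real.norm_eq_abs, Real.abs_exp]
    exact exp_neg_phase_le_one hG hd N hα hy

lemma Qnorm_le (hG : ConvexOn ℝ (Icc 0 1) G) (hd : DifferentiableOn ℝ G (Ioo 0 1)) (N : ℕ)
    (hα : α ∈ Icc (0 : ℝ) 1) : Qnorm G N α ≤ 2 * Real.pi := by
  refine mul_le_of_le_one_right (by positivity) ?_
  calc ∫ y in (0 : ℝ)..1, Real.exp (-(N : ℝ) * Phase G α y)
      ≤ ∫ _ in (0 : ℝ)..1, (1 : ℝ) :=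
        intervalIntegral.integral_mono_on_of_le_Ioo zero_le_one
          (intervalIntegrable_exp_neg_phase hG hd N hα) intervalIntegrable_const
          fun y hy => exp_neg_phase_le_one hG hd N hα hy
    _ = 1 := by simp

lemma le_Qnorm (hG : ConvexOn ℝ (Icc 0 1) G) (hd : DifferentiableOn ℝ G (Ioo 0 1)) (N : ℕ)
    {r ω : ℝ} (hr : 0 < r) (hr₁ : r ≤ 1 / 4)
    (hω : ∀ y ∈ Icc (0 : ℝ) 1, ∀ z ∈ Icc (0 : ℝ) 1, |y - z| < r → |G y - G z| ≤ ω)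
    (hα : α ∈ Icc (0 : ℝ) 1) :
    2 * Real.pi * (r * Real.exp (-(N : ℝ) * (2 * ω))) ≤ Qnorm G N α := by
  obtain ⟨a, ha₀, ha₁, hphase⟩ := exists_Ioo_phase_le hG hd hr₁ hω hα
  have hint := intervalIntegrable_exp_neg_phase hG hd N hα
  have har : a ≤ a + r := by linarith
  have hint' : IntervalIntegrable (fun y => Real.exp (-(N : ℝ) * Phase G α y))
      MeasureTheory.volume a (a + r) := by
    refine hint.mono_set ?_
    rw [uIcc_of_le har, uIcc_of_le zero_le_one]
    exact Icc_subset_Icc ha₀ ha₁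
  refine mul_le_mul_of_nonneg_left ?_ (by positivity)
  calc r * Real.exp (-(N : ℝ) * (2 * ω))
      = ∫ _ in a..(a + r), Real.exp (-(N : ℝ) * (2 * ω)) := by simp
    _ ≤ ∫ y in a..(a + r), Real.exp (-(N : ℝ) * Phase G α y) :=
        intervalIntegral.integral_mono_on_of_le_Ioo har intervalIntegrable_const hint'
          fun y hy => Real.exp_le_exp.2 <|
            mul_le_mul_of_nonpos_left (hphase y hy) (neg_nonpos.2 N.cast_nonneg)
    _ ≤ ∫ y in (0 : ℝ)..1, Real.exp (-(N : ℝ) * Phase G α y) :=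
        intervalIntegral.integral_mono_interval ha₀ har ha₁
          (.of_forall fun _ => (Real.exp_pos _).le) hint

end NormingConstant

section Localization

/-- The normalized monomial norm `P_α^N(ρ)` attached to an arbitrary symplectic potential `G` on
`[0, 1]`; `Pcal` is the case `G = Gt f0 f1 t`. -/
noncomputable def monomialNorm (G : ℝ → ℝ) (N : ℕ) (ρ α : ℝ) : ℝ :=
  Real.exp ((N : ℝ) * (α * ρ - Leg G (Icc 0 1) ρ)) / QQ G N α

lemma monomialNorm_eq_exp_youngGap_div (G : ℝ → ℝ) (N : ℕ) (ρ α : ℝ) :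
    monomialNorm G N ρ α =
      Real.exp (-(N : ℝ) * youngGap G (Icc 0 1) ρ α) / Qnorm G N α := by
  rw [monomialNorm, QQ, mul_comm (Qnorm G N α), ← div_div, ← Real.exp_sub]
  congr 2
  unfold youngGap
  ring

lemma monomialNorm_le {G : ℝ → ℝ} {m δ₁ δ₂ ω : ℝ} (hm : 0 < m)
    (hG : StrongConvexOn (Icc 0 1) m G) (hGc : ContinuousOn G (Icc 0 1))
    (hd : DifferentiableOn ℝ G (Ioo 0 1)) (hδ₁_le : δ₁ ≤ 1 / 4) (hδ : δ₁ ≤ δ₂)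
    (hω : ∀ y ∈ Icc (0 : ℝ) 1, ∀ z ∈ Icc (0 : ℝ) 1, |y - z| < δ₁ → |G y - G z| ≤ ω)
    (N : ℕ) {ρ α β : ℝ} (hα : α ∈ Icc (0 : ℝ) 1) (hβ : β ∈ Icc (0 : ℝ) 1)
    (hαx : |α - deriv (Leg G (Icc 0 1)) ρ| < δ₁)
    (hβx : 2 * δ₂ ≤ |β - deriv (Leg G (Icc 0 1)) ρ|) :
    monomialNorm G N ρ β ≤
      1 / δ₁ * Real.exp (-(m * δ₂ ^ 2 - 4 * ω) * N) * monomialNorm G N ρ α := by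
  have hδ₁ : 0 < δ₁ := (abs_nonneg _).trans_lt hαx
  have hconv : ConvexOn ℝ (Icc 0 1) G := strongConvexOn_zero.1 (hG.mono hm.le)
  set D := youngGap G (Icc 0 1) ρ with hD
  have hgap : D α + (m * δ₂ ^ 2 - 2 * ω) ≤ D β :=
    youngGap_add_le_of_abs_sub_deriv_leg isCompact_Icc hGc hm hG hω hδ hα hβ hαx hβx
  have hQα : 0 < Qnorm G N α :=
    lt_of_lt_of_le (by positivity) (le_Qnorm hconv hd N hδ₁ hδ₁_le hω hα)
  have hQβ := le_Qnorm hconv hd N hδ₁ hδ₁_le hω hβ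
  have hexp : -(N : ℝ) * D β - -(N : ℝ) * (2 * ω) ≤
      -(m * δ₂ ^ 2 - 4 * ω) * N + -(N : ℝ) * D α := by
    linarith [mul_le_mul_of_nonneg_left hgap (N.cast_nonneg (α := ℝ))]
  rw [monomialNorm_eq_exp_youngGap_div, monomialNorm_eq_exp_youngGap_div, ← hD]
  calc Real.exp (-N * D β) / Qnorm G N β
      ≤ Real.exp (-N * D β) / (2 * Real.pi * (δ₁ * Real.exp (-N * (2 * ω)))) := by gcongr
    _ = 1 / δ₁ * Real.exp (-N * D β - -N * (2 * ω)) / (2 * Real.pi) := by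
        rw [Real.exp_sub]
        field_simp
    _ ≤ 1 / δ₁ * Real.exp (-(m * δ₂ ^ 2 - 4 * ω) * N + -N * D α) / Qnorm G N α := by
        gcongr
        exact Qnorm_le hconv hd N hα
    _ = 1 / δ₁ * Real.exp (-(m * δ₂ ^ 2 - 4 * ω) * N) *
          (Real.exp (-N * D α) / Qnorm G N α) := by
        rw [Real.exp_add]
        ring

theorem exists_monomialNorm_localization {ι : Type*} {G : ι → ℝ → ℝ} {m : ℝ} (hm : 0 < m)
    (hG : ∀ i, StrongConvexOn (Icc 0 1) m (G i))
    (hd : ∀ i, DifferentiableOn ℝ (G i) (Ioo 0 1))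
    (hequi : UniformEquicontinuousOn G (Icc 0 1)) {δ : ℝ} (hδ : 0 < δ) :
    ∃ δ₁ δ₂ ε C : ℝ, 0 < δ₁ ∧ δ₁ < δ ∧ 0 < δ₂ ∧ δ₂ < δ ∧ δ₁ < δ₂ ∧ 0 < ε ∧ 0 < C ∧
      ∀ i, ∀ N : ℕ, ∀ ρ : ℝ, ∀ α ∈ Icc (0 : ℝ) 1, ∀ β ∈ Icc (0 : ℝ) 1,
        |α - deriv (Leg (G i) (Icc 0 1)) ρ| < δ₁ →
        2 * δ₂ ≤ |β - deriv (Leg (G i) (Icc 0 1)) ρ| →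
        monomialNorm (G i) N ρ β ≤ C * Real.exp (-ε * N) * monomialNorm (G i) N ρ α := by
  have hω : 0 < m * (δ / 2) ^ 2 / 8 := by positivity
  obtain ⟨r, hr, hmod⟩ := uniformEquicontinuousOn_iff_dist.1 hequi _ hω
  obtain ⟨δ₁, hδ₁, hlt⟩ : ∃ δ₁, 0 < δ₁ ∧ δ₁ < min r (min (δ / 2) (1 / 4)) :=
    exists_between (by positivity)
  simp only [lt_min_iff] at hlt
  obtain ⟨hδ₁r, hδ₁δ, hδ₁_le⟩ := hlt
  refine ⟨δ₁, δ / 2, m * (δ / 2) ^ 2 - 4 * (m * (δ / 2) ^ 2 / 8), 1 / δ₁, hδ₁, by linarith,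
    by linarith, by linarith, hδ₁δ, by linarith, by positivity, ?_⟩
  intro i N ρ α hα β hβ hαx hβx
  exact monomialNorm_le hm (hG i) (hequi.uniformContinuousOn i).continuousOn (hd i) hδ₁_le.le
    hδ₁δ.le (fun y hy z hz hyz => (hmod i y hy z hz (hyz.trans hδ₁r)).le) N hα hβ hαx hβx

end Localization

section SymplecticPotential

variable {f : ℝ → ℝ} {x : ℝ}

lemma GP_eq_neg_binEntropy : GP = -Real.binEntropy := by
  funext x
  rw [Pi.neg_apply, Real.binEntropy_eq_negMulLog_add_negMulLog_one_sub, GP, Real.negMulLog,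
    Real.negMulLog]
  ring

lemma continuous_GP : Continuous GP := by
  rw [GP_eq_neg_binEntropy]
  fun_prop

lemma contDiffAt_GP {n : WithTop ℕ∞} (hx : x ∈ Ioo (0 : ℝ) 1) : ContDiffAt ℝ n GP x := by
  have hx₀ : x ≠ 0 := hx.1.ne'
  have hx₁ : 1 - x ≠ 0 := (sub_pos.2 hx.2).ne'
  unfold GP
  fun_prop (disch := assumption)

lemma iteratedDeriv_two_GP_add (hf : ContDiffAt ℝ 2 f x) (hx : x ∈ Ioo (0 : ℝ) 1) :
    iteratedDeriv 2 (GP + f) x = 1 / (x * (1 - x)) + iteratedDeriv 2 f x := by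
  rw [iteratedDeriv_add (contDiffAt_GP hx) hf, GP_eq_neg_binEntropy, iteratedDeriv_neg,
    iteratedDeriv_eq_iterate, Real.deriv2_binEntropy, neg_div, neg_neg]

-- `x (1 - x) (GP + f)''` extends continuously to `[0, 1]`, with value `1` at the endpoints.
lemma exists_pos_forall_le_iteratedDeriv_two_GP_add (hf : ContDiff ℝ 2 f)
    (hpos : ∀ x ∈ Ioo (0 : ℝ) 1, 0 < iteratedDeriv 2 (GP + f) x) :
    ∃ m > 0, ∀ x ∈ Ioo (0 : ℝ) 1, m ≤ iteratedDeriv 2 (GP + f) x := by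
  set w : ℝ → ℝ := fun x => 1 + x * (1 - x) * iteratedDeriv 2 f x with hw
  have hwc : Continuous w := by
    have := hf.continuous_iteratedDeriv' 2
    fun_prop
  have hw_eq : ∀ x ∈ Ioo (0 : ℝ) 1, w x = x * (1 - x) * iteratedDeriv 2 (GP + f) x := by
    intro x hx
    have hx₀ : x ≠ 0 := hx.1.ne'
    have hx₁ : 1 - x ≠ 0 := (sub_pos.2 hx.2).ne'
    rw [iteratedDeriv_two_GP_add hf.contDiffAt hx, hw]
    field_simp
  have hw_pos : ∀ x ∈ Icc (0 : ℝ) 1, 0 < w x := by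
    intro x hx
    rcases eq_endpoints_or_mem_Ioo_of_mem_Icc hx with rfl | rfl | hx'
    · simp [hw]
    · simp [hw]
    · rw [hw_eq x hx']
      exact mul_pos (mul_pos hx'.1 (sub_pos.2 hx'.2)) (hpos x hx')
  obtain ⟨z, hz, hmin⟩ :=
    isCompact_Icc.exists_isMinOn (nonempty_Icc.2 zero_le_one) hwc.continuousOn
  refine ⟨w z, hw_pos z hz, fun x hx => ?_⟩
  calc w z ≤ w x := hmin (Ioo_subset_Icc_self hx)
    _ = x * (1 - x) * iteratedDeriv 2 (GP + f) x := hw_eq x hx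
    _ ≤ iteratedDeriv 2 (GP + f) x :=
        mul_le_of_le_one_left (hpos x hx).le (by nlinarith [hx.1, hx.2])

lemma exists_strongConvexOn_GP_add (hf : ContDiff ℝ 2 f)
    (hpos : ∀ x ∈ Ioo (0 : ℝ) 1, 0 < iteratedDeriv 2 (GP + f) x) :
    ∃ m > 0, StrongConvexOn (Icc 0 1) m (GP + f) := by
  obtain ⟨m, hm, hle⟩ := exists_pos_forall_le_iteratedDeriv_two_GP_add hf hpos
  refine ⟨m, hm, strongConvexOn_of_le_iteratedDeriv_two (convex_Icc 0 1)
    (continuous_GP.add hf.continuous).continuousOn (fun x hx => ?_) fun x hx => ?_⟩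
  · rw [interior_Icc] at hx
    exact (contDiffAt_GP hx).add hf.contDiffAt
  · rw [interior_Icc] at hx
    exact hle x hx

end SymplecticPotential

section Interpolation

variable {f0 f1 : ℝ → ℝ}

lemma Gt_zero : Gt f0 f1 0 = GP + f0 := by
  funext x
  simp [Gt]

lemma Gt_one : Gt f0 f1 1 = GP + f1 := by
  funext x
  simp [Gt]

lemma Gt_eq_convexCombination (t : ℝ) :
    Gt f0 f1 t = fun x => (1 - t) * (GP + f0) x + t * (GP + f1) x := by
  funext x
  simp only [Gt, Pi.add_apply]
  ring

lemma exists_forall_strongConvexOn_Gt (hf0 : ContDiff ℝ 2 f0) (hf1 : ContDiff ℝ 2 f1)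
    (hG0 : ∀ x ∈ Ioo (0 : ℝ) 1, 0 < iteratedDeriv 2 (Gt f0 f1 0) x)
    (hG1 : ∀ x ∈ Ioo (0 : ℝ) 1, 0 < iteratedDeriv 2 (Gt f0 f1 1) x) :
    ∃ m > 0, ∀ t ∈ Icc (0 : ℝ) 1, StrongConvexOn (Icc 0 1) m (Gt f0 f1 t) := by
  rw [Gt_zero] at hG0
  rw [Gt_one] at hG1
  obtain ⟨m₀, hm₀, hconv₀⟩ := exists_strongConvexOn_GP_add hf0 hG0
  obtain ⟨m₁, hm₁, hconv₁⟩ := exists_strongConvexOn_GP_add hf1 hG1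
  refine ⟨min m₀ m₁, lt_min hm₀ hm₁, fun t ht => ?_⟩
  rw [Gt_eq_convexCombination]
  exact strongConvexOn_convexCombination (hconv₀.mono (min_le_left _ _))
    (hconv₁.mono (min_le_right _ _)) (sub_nonneg.2 ht.2) ht.1 (sub_add_cancel 1 t)

lemma differentiableOn_Gt (hf0 : Differentiable ℝ f0) (hf1 : Differentiable ℝ f1) (t : ℝ) :
    DifferentiableOn ℝ (Gt f0 f1 t) (Ioo 0 1) := by
  intro x hx
  have hGP : DifferentiableAt ℝ GP x := (contDiffAt_GP hx).differentiableAt one_ne_zero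
  unfold Gt
  exact DifferentiableAt.differentiableWithinAt (by fun_prop)

lemma uniformEquicontinuousOn_Gt (hf0 : Continuous f0) (hf1 : Continuous f1) :
    UniformEquicontinuousOn (fun t : Icc (0 : ℝ) 1 => Gt f0 f1 t) (Icc 0 1) := by
  refine uniformEquicontinuousOn_of_continuousOn_prod isCompact_Icc isCompact_Icc
    (Continuous.continuousOn ?_)
  have hGP := continuous_GP
  unfold Gt
  fun_prop

end Interpolation

theorem bergman_cp1_localization_lemma_general
    (f0 f1 : ℝ → ℝ) (hf0 : ContDiff ℝ 2 f0) (hf1 : ContDiff ℝ 2 f1)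
    (hG0 : ∀ x ∈ Ioo (0 : ℝ) 1, 0 < iteratedDeriv 2 (Gt f0 f1 0) x)
    (hG1 : ∀ x ∈ Ioo (0 : ℝ) 1, 0 < iteratedDeriv 2 (Gt f0 f1 1) x) :
    ∀ δ : ℝ, 0 < δ → ∃ δ₁ δ₂ ε C : ℝ,
      0 < δ₁ ∧ δ₁ < δ ∧ 0 < δ₂ ∧ δ₂ < δ ∧ δ₁ < δ₂ ∧ 0 < ε ∧ 0 < C ∧
      ∀ N : ℕ, ∀ t ∈ Icc (0 : ℝ) 1, ∀ ρ : ℝ,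
        ∀ α ∈ Icc (0 : ℝ) 1, ∀ β ∈ Icc (0 : ℝ) 1,
          |α - deriv (Leg (Gt f0 f1 t) (Icc 0 1)) ρ| < δ₁ →
          2 * δ₂ ≤ |β - deriv (Leg (Gt f0 f1 t) (Icc 0 1)) ρ| →
          Pcal f0 f1 N t ρ β ≤ C * Real.exp (-ε * N) * Pcal f0 f1 N t ρ α := by
  intro δ hδ
  obtain ⟨m, hm, hconv⟩ := exists_forall_strongConvexOn_Gt hf0 hf1 hG0 hG1
  obtain ⟨δ₁, δ₂, ε, C, h₁, h₁', h₂, h₂', h₁₂, hε, hC, hloc⟩ :=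
    exists_monomialNorm_localization hm (fun t : Icc (0 : ℝ) 1 => hconv t t.2)
      (fun t => differentiableOn_Gt (hf0.differentiable two_ne_zero)
        (hf1.differentiable two_ne_zero) t)
      (uniformEquicontinuousOn_Gt hf0.continuous hf1.continuous) hδ
  exact ⟨δ₁, δ₂, ε, C, h₁, h₁', h₂, h₂', h₁₂, hε, hC, fun N t ht => hloc ⟨t, ht⟩ N⟩

theorem bergman_cp1_localization_lemma
    (f0 f1 : ℝ → ℝ) (hf0 : ContDiff ℝ (⊤ : ℕ∞) f0) (hf1 : ContDiff ℝ (⊤ : ℕ∞) f1)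
    (hG0 : ∀ x ∈ Set.Ioo (0:ℝ) 1, 0 < iteratedDeriv 2 (Gt f0 f1 0) x)
    (hG1 : ∀ x ∈ Set.Ioo (0:ℝ) 1, 0 < iteratedDeriv 2 (Gt f0 f1 1) x) :
    ∀ δ : ℝ, 0 < δ → ∃ δ₁ δ₂ ε C : ℝ,
      0 < δ₁ ∧ δ₁ < δ ∧ 0 < δ₂ ∧ δ₂ < δ ∧ δ₁ < δ₂ ∧ 0 < ε ∧ 0 < C ∧
      ∀ N : ℕ, 1 ≤ N → ∀ t ∈ Set.Icc (0:ℝ) 1, ∀ ρ : ℝ,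
        ∀ α ∈ Set.Icc (0:ℝ) 1, ∀ β ∈ Set.Icc (0:ℝ) 1,
          (∃ j : ℕ, α = (j:ℝ) / (N:ℝ)) → (∃ j : ℕ, β = (j:ℝ) / (N:ℝ)) →
          |α - deriv (Leg (Gt f0 f1 t) (Set.Icc 0 1)) ρ| < δ₁ →
          2 * δ₂ ≤ |β - deriv (Leg (Gt f0 f1 t) (Set.Icc 0 1)) ρ| →
          Pcal f0 f1 N t ρ β ≤ C * Real.exp (-ε * (N:ℝ)) * Pcal f0 f1 N t ρ α := by
  intro δ hδ
  obtain ⟨δ₁, δ₂, ε, C, h₁, h₁', h₂, h₂', h₁₂, hε, hC, hloc⟩ :=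
    bergman_cp1_localization_lemma_general f0 f1 (contDiff_infty.1 hf0 2)
      (contDiff_infty.1 hf1 2) hG0 hG1 δ hδ
  exact ⟨δ₁, δ₂, ε, C, h₁, h₁', h₂, h₂', h₁₂, hε, hC,
    fun N _ t ht ρ α hα β hβ _ _ => hloc N t ht ρ α hα β hβ⟩
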